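/- For an essentially small triangulated category T, the canonical map K_0(T) → K_0(T~) induced by the fully faithful embedding of T into its idempotent completion T~ is injective. -/

import Mathlib

open CategoryTheory Limits ZeroObject Pretriangulated

universe w v u v' u' v'' u''

namespace Paper

section K0

variable (T : Type u) [Category.{v} T] [HasZeroObject T] [Preadditive T]
  [HasShift T ℤ] [∀ n : ℤ, (shiftFunctor T n).Additive] [Pretriangulated T]

/-- The generating relations of the Grothendieck group of a pretriangulated category:
for every distinguished triangle `X ⟶ Y ⟶ Z ⟶ X⟦1⟧`, we impose `[Y] = [X] + [Z]`. -/
def K0Rels : Set (FreeAbelianGroup (Quotient (isIsomorphicSetoid T))) :=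
  { x | ∃ Tr : Triangle T, (Tr ∈ distTriang T) ∧
      x = FreeAbelianGroup.of (Quotient.mk (isIsomorphicSetoid T) Tr.obj₂) -
          FreeAbelianGroup.of (Quotient.mk (isIsomorphicSetoid T) Tr.obj₁) -
          FreeAbelianGroup.of (Quotient.mk (isIsomorphicSetoid T) Tr.obj₃) }

/-- The Grothendieck group `K₀` of a pretriangulated category: the free abelian group
on isomorphism classes of objects, modulo the relations coming from distinguished
triangles. -/
def K0 : Type u :=
  FreeAbelianGroup (Quotient (isIsomorphicSetoid T)) ⧸ AddSubgroup.closure (K0Rels T)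

instance : AddCommGroup (K0 T) :=
  inferInstanceAs (AddCommGroup (_ ⧸ AddSubgroup.closure (K0Rels T)))

variable {T}
variable {T' : Type u'} [Category.{v'} T'] [HasZeroObject T'] [Preadditive T']
  [HasShift T' ℤ] [∀ n : ℤ, (shiftFunctor T' n).Additive] [Pretriangulated T']

/-- The homomorphism `K₀(T) → K₀(T')` induced by a triangulated functor. -/
noncomputable def K0Map (F : T ⥤ T') [F.CommShift ℤ] [F.IsTriangulated] :
    K0 T →+ K0 T' :=
  QuotientAddGroup.map _ _
    (FreeAbelianGroup.map
      (Quotient.map F.obj fun _ _ h => h.elim fun e => ⟨F.mapIso e⟩))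
    (by
      refine (AddSubgroup.closure_le _).2 ?_
      rintro x ⟨Tr, hTr, rfl⟩
      simp only [SetLike.mem_coe, AddSubgroup.mem_comap]
      refine AddSubgroup.subset_closure
        (⟨F.mapTriangle.obj Tr, F.map_distinguished _ hTr, ?_⟩ : _ ∈ K0Rels T')
      simp [map_sub, FreeAbelianGroup.map_of_apply, Quotient.map_mk])

/-- `ι : T ⥤ T'` exhibits `T'` as the idempotent completion of `T` : it is a fully
faithful functor into an idempotent complete category such that every object of `T'`
is a direct summand (retract) of an object coming from `T`. -/
structure IsIdempotentCompletion {A : Type u} [Category.{v} A] {A' : Type u'}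
    [Category.{v'} A'] (ι : A ⥤ A') : Prop where
  full : ι.Full
  faithful : ι.Faithful
  complete : IsIdempotentComplete A'
  dense : ∀ Y : A', ∃ (X : A) (s : Y ⟶ ι.obj X) (r : ι.obj X ⟶ Y), s ≫ r = 𝟙 Y

end K0

end Paper

namespace Paper

section Helpers

variable (C : Type u) [Category.{v} C] [HasZeroObject C] [Preadditive C]
  [HasShift C ℤ] [∀ n : ℤ, (shiftFunctor C n).Additive] [Pretriangulated C]

/-- Isomorphism classes of objects. -/
abbrev IsoCl (C : Type u) [Category.{v} C] : Type u := Quotient (isIsomorphicSetoid C)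

variable {C}

/-- The class of an object. -/
def cl {C : Type u} [Category.{v} C] (X : C) : IsoCl C := Quotient.mk (isIsomorphicSetoid C) X

lemma cl_eq_iff {C : Type u} [Category.{v} C] {X Y : C} : cl X = cl Y ↔ Nonempty (X ≅ Y) :=
  ⟨fun h => Quotient.exact h, fun h => Quotient.sound h⟩

lemma cl_surj {C : Type u} [Category.{v} C] (x : IsoCl C) : ∃ X : C, cl X = x := by
  obtain ⟨X, rfl⟩ := Quotient.exists_rep x
  exact ⟨X, rfl⟩

noncomputable instance : Add (IsoCl C) :=
  ⟨Quotient.map₂ (fun X Y => X ⊞ Y) (fun _ _ ⟨e⟩ _ _ ⟨e'⟩ => ⟨biprod.mapIso e e'⟩)⟩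

noncomputable instance : Zero (IsoCl C) := ⟨cl (0 : C)⟩

lemma cl_biprod (X Y : C) : cl (X ⊞ Y) = cl X + cl Y := rfl

lemma cl_zero : cl (0 : C) = 0 := rfl

lemma isoCl_add_comm (x y : IsoCl C) : x + y = y + x := by
  obtain ⟨X, rfl⟩ := cl_surj x
  obtain ⟨Y, rfl⟩ := cl_surj y
  exact cl_eq_iff.2 ⟨biprod.braiding X Y⟩

lemma isoCl_add_zero (x : IsoCl C) : x + 0 = x := by
  obtain ⟨X, rfl⟩ := cl_surj x
  refine cl_eq_iff.2 ⟨⟨biprod.fst, biprod.inl, ?_, by simp⟩⟩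
  apply biprod.hom_ext
  · simp
  · exact (isZero_zero C).eq_of_tgt _ _

noncomputable instance : AddCommMonoid (IsoCl C) where
  add_assoc x y z := by
    obtain ⟨X, rfl⟩ := cl_surj x
    obtain ⟨Y, rfl⟩ := cl_surj y
    obtain ⟨Z, rfl⟩ := cl_surj z
    exact cl_eq_iff.2 ⟨biprod.associator X Y Z⟩
  zero_add x := by rw [isoCl_add_comm, isoCl_add_zero]
  add_zero := isoCl_add_zero
  add_comm := isoCl_add_comm
  nsmul := nsmulRec

/-- `y` is an extension of `z` by `x`. -/
def DT (x y z : IsoCl C) : Prop :=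
  ∃ Tr : Triangle C, (Tr ∈ distTriang C) ∧ cl Tr.obj₁ = x ∧ cl Tr.obj₂ = y ∧ cl Tr.obj₃ = z

lemma DT.split (x z : IsoCl C) : DT x (x + z) z := by
  obtain ⟨X, rfl⟩ := cl_surj x
  obtain ⟨Z, rfl⟩ := cl_surj z
  exact ⟨_, binaryBiproductTriangle_distinguished X Z, rfl, rfl, rfl⟩

lemma DT.shift (X : C) : DT (cl X) 0 (cl (X⟦(1 : ℤ)⟧)) :=
  ⟨_, contractible_distinguished₂ X, rfl, rfl, rfl⟩

lemma cl_pi (f : Bool → C) : cl (∏ᶜ f) = cl (f true) + cl (f false) := by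
  refine cl_eq_iff.2 ⟨⟨biprod.lift (Pi.π f true) (Pi.π f false),
    Pi.lift (fun b => match b with | true => biprod.fst | false => biprod.snd), ?_, ?_⟩⟩
  · apply Pi.hom_ext
    rintro (_ | _) <;> simp
  · apply biprod.hom_ext <;> simp

lemma DT.add {x y z x' y' z' : IsoCl C} (h : DT x y z) (h' : DT x' y' z') :
    DT (x + x') (y + y') (z + z') := by
  obtain ⟨S, hS, rfl, rfl, rfl⟩ := h
  obtain ⟨S', hS', rfl, rfl, rfl⟩ := h'
  refine ⟨productTriangle (fun b : Bool => match b with | true => S | false => S'),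
    productTriangle_distinguished _ ?_, ?_, ?_, ?_⟩
  · rintro (_ | _) <;> assumption
  · exact cl_pi _
  · exact cl_pi _
  · exact cl_pi _

/-- Landsburg's relation. -/
def LRel (a b : IsoCl C) : Prop := ∃ c d e, DT c (a + d) e ∧ DT c (b + d) e

variable (C) in
/-- Landsburg's congruence. -/
def LCon : AddCon (IsoCl C) where
  r := LRel
  iseqv := by
    refine ⟨fun a => ⟨a, 0, 0, ?_, ?_⟩, ?_, ?_⟩
    · simpa using DT.split a 0
    · simpa using DT.split a 0
    · rintro a b ⟨c, d, e, h, h'⟩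
      exact ⟨c, d, e, h', h⟩
    · rintro a b f ⟨c, d, e, h, h'⟩ ⟨c', d', e', k, k'⟩
      refine ⟨c + c', b + d + d', e + e', ?_, ?_⟩
      · convert h.add k using 1
        abel
      · convert h'.add k' using 1
        abel
  add' := by
    rintro a b a' b' ⟨c, d, e, h, h'⟩ ⟨c', d', e', k, k'⟩
    refine ⟨c + c', d + d', e + e', ?_, ?_⟩
    · convert h.add k using 1
      abel
    · convert h'.add k' using 1
      abel

lemma DT.lcon {x y z : IsoCl C} (h : DT x y z) : LCon C y (x + z) :=
  ⟨x, 0, z, by simpa using h, by simpa using DT.split x z⟩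

lemma isAddUnit_mk (x : IsoCl C) : IsAddUnit (x : (LCon C).Quotient) := by
  obtain ⟨X, rfl⟩ := cl_surj x
  refine IsAddUnit.of_add_eq_zero ((cl (X⟦(1 : ℤ)⟧) : IsoCl C) : (LCon C).Quotient) ?_
  exact ((LCon C).eq.2 (DT.shift X).lcon).symm

variable (C) in
/-- The map to the Landsburg group. -/
noncomputable def toL : FreeAbelianGroup (IsoCl C) →+ AddUnits (LCon C).Quotient :=
  FreeAbelianGroup.lift (fun x => (isAddUnit_mk (C := C) x).addUnit)

lemma toL_of (x : IsoCl C) :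
    ((toL C (FreeAbelianGroup.of x) : AddUnits (LCon C).Quotient) : (LCon C).Quotient) = x := by
  simp [toL]

lemma toL_rel (Tr : Triangle C) (h : Tr ∈ distTriang C) :
    toL C (FreeAbelianGroup.of (cl Tr.obj₂) - FreeAbelianGroup.of (cl Tr.obj₁) -
      FreeAbelianGroup.of (cl Tr.obj₃)) = 0 := by
  rw [sub_sub, map_sub, sub_eq_zero, map_add]
  ext
  rw [AddUnits.val_add, toL_of, toL_of, toL_of]
  exact (LCon C).eq.2 (DT.lcon ⟨Tr, h, rfl, rfl, rfl⟩)

variable (C) in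
lemma closure_le_ker : AddSubgroup.closure (K0Rels C) ≤ (toL C).ker := by
  refine (AddSubgroup.closure_le _).2 ?_
  rintro x ⟨Tr, hTr, rfl⟩
  exact toL_rel Tr hTr

/-- The class of an object in `K0`. -/
def K0.mk (X : C) : K0 C := QuotientAddGroup.mk (FreeAbelianGroup.of (cl X))

lemma K0.mk_eq_of {X Y : C} (h : cl X = cl Y) : K0.mk X = K0.mk Y := by
  unfold K0.mk
  rw [h]

lemma K0.mk_dist (Tr : Triangle C) (h : Tr ∈ distTriang C) :
    K0.mk Tr.obj₂ = K0.mk Tr.obj₁ + K0.mk Tr.obj₃ := by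
  have : (QuotientAddGroup.mk (FreeAbelianGroup.of (cl Tr.obj₂) -
      FreeAbelianGroup.of (cl Tr.obj₁) - FreeAbelianGroup.of (cl Tr.obj₃)) : K0 C) = 0 :=
    (QuotientAddGroup.eq_zero_iff _).2 (AddSubgroup.subset_closure ⟨Tr, h, rfl⟩)
  have h2 : K0.mk Tr.obj₂ - K0.mk Tr.obj₁ - K0.mk Tr.obj₃ = 0 := this
  rwa [sub_sub, sub_eq_zero] at h2

lemma K0.mk_biprod (X Y : C) : K0.mk (X ⊞ Y) = K0.mk X + K0.mk Y :=
  K0.mk_dist _ (binaryBiproductTriangle_distinguished X Y)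

lemma K0.mk_zero : K0.mk (0 : C) = 0 := by
  have h := K0.mk_biprod (0 : C) 0
  rw [K0.mk_eq_of (cl_biprod (0 : C) 0 |>.trans (add_zero (0 : IsoCl C)) : cl ((0 : C) ⊞ 0) = cl (0 : C))] at h
  simpa using h

lemma K0.mk_shift (X : C) : K0.mk (X⟦(1 : ℤ)⟧) = - K0.mk X := by
  have h := K0.mk_dist _ (contractible_distinguished₂ X)
  change K0.mk (0 : C) = K0.mk X + K0.mk (X⟦(1 : ℤ)⟧) at h
  rw [K0.mk_zero] at h
  exact (neg_eq_of_add_eq_zero_right h.symm).symm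

lemma K0.exists_mk (x : K0 C) : ∃ X : C, K0.mk X = x := by
  obtain ⟨x, rfl⟩ := QuotientAddGroup.mk_surjective x
  induction x using FreeAbelianGroup.induction_on with
  | zero => exact ⟨0, K0.mk_zero⟩
  | of x =>
    obtain ⟨X, rfl⟩ := cl_surj x
    exact ⟨X, rfl⟩
  | neg x _ =>
    obtain ⟨X, rfl⟩ := cl_surj x
    exact ⟨X⟦(1 : ℤ)⟧, K0.mk_shift X⟩
  | add x y hx hy =>
    obtain ⟨X, hX⟩ := hx
    obtain ⟨Y, hY⟩ := hy
    refine ⟨X ⊞ Y, ?_⟩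
    rw [K0.mk_biprod, hX, hY]
    rfl

lemma lrel_of_mk_eq_zero {X : C} (h : K0.mk X = 0) : LRel (cl X) 0 := by
  have h1 : FreeAbelianGroup.of (cl X) ∈ AddSubgroup.closure (K0Rels C) :=
    (QuotientAddGroup.eq_zero_iff _).1 h
  have h2 : toL C (FreeAbelianGroup.of (cl X)) = 0 := closure_le_ker C h1
  have h3 := toL_of (cl X)
  rw [h2] at h3
  exact (LCon C).eq.1 h3.symm

variable {T' : Type u'} [Category.{v'} T'] [HasZeroObject T'] [Preadditive T']
  [HasShift T' ℤ] [∀ n : ℤ, (shiftFunctor T' n).Additive] [Pretriangulated T']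

lemma K0Map_mk (F : C ⥤ T') [F.CommShift ℤ] [F.IsTriangulated] (X : C) :
    K0Map F (K0.mk X) = K0.mk (F.obj X) := by
  change QuotientAddGroup.mk (FreeAbelianGroup.map _ (FreeAbelianGroup.of _)) = _
  rw [FreeAbelianGroup.map_of_apply]
  rfl

lemma exists_compl (F : C ⥤ T') [F.CommShift ℤ] [F.IsTriangulated]
    (hF : IsIdempotentCompletion F) (y : IsoCl T') :
    ∃ (y' : IsoCl T') (X : C), y + y' = cl (F.obj X) := by
  obtain ⟨Y, rfl⟩ := cl_surj y
  obtain ⟨X, s, r, hsr⟩ := hF.dense Y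
  obtain ⟨Z, g, h, hT⟩ := distinguished_cocone_triangle s
  have hs : Mono s := by
    have : Mono (s ≫ r) := by rw [hsr]; infer_instance
    exact mono_of_mono s r
  obtain ⟨e, -⟩ := exists_iso_binaryBiproduct_of_distTriang _ hT
    (Triangle.mor₃_eq_zero_of_mono₁ _ hT hs)
  exact ⟨cl Z, X, cl_eq_iff.2 ⟨e.symm⟩⟩

lemma DT.reflect_of_image (F : C ⥤ T') [F.CommShift ℤ] [F.IsTriangulated]
    (hF : IsIdempotentCompletion F) {X Z : C} {y : IsoCl T'}
    (h : DT (cl (F.obj X)) y (cl (F.obj Z))) :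
    ∃ Y : C, cl (F.obj Y) = y ∧ K0.mk Y = K0.mk X + K0.mk Z := by
  have := hF.full
  have := hF.faithful
  obtain ⟨Tr, hTr, h1, rfl, h3⟩ := h
  obtain ⟨e1⟩ := cl_eq_iff.1 h1
  obtain ⟨e3⟩ := cl_eq_iff.1 h3
  obtain ⟨k, hk⟩ := F.map_surjective
    (e3.inv ≫ Tr.mor₃ ≫ (shiftFunctor T' (1 : ℤ)).map e1.hom ≫ (F.commShiftIso (1 : ℤ)).inv.app X)
  obtain ⟨Y, f, g, hY⟩ := distinguished_cocone_triangle₂ k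
  refine ⟨Y, ?_, K0.mk_dist _ hY⟩
  have hc : Tr.mor₃ ≫ (shiftFunctor T' (1 : ℤ)).map e1.hom =
      e3.hom ≫ F.map k ≫ (F.commShiftIso (1 : ℤ)).hom.app X := by
    rw [hk]
    simp
  have e := isoTriangleOfIso₁₃ _ _ hTr (F.map_distinguished _ hY) e1 e3 hc
  exact (cl_eq_iff.2 ⟨Triangle.π₂.mapIso e⟩).symm

end Helpers

end Paper

open Paper in
theorem aux_stmt {T : Type u} [Category.{v} T] [HasZeroObject T] [Preadditive T]
    [HasShift T ℤ] [∀ n : ℤ, (shiftFunctor T n).Additive] [Pretriangulated T]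
    {T' : Type u'} [Category.{v'} T'] [HasZeroObject T'] [Preadditive T']
    [HasShift T' ℤ] [∀ n : ℤ, (shiftFunctor T' n).Additive] [Pretriangulated T']
    (ι : T ⥤ T') [ι.CommShift ℤ] [ι.IsTriangulated]
    (hι : Paper.IsIdempotentCompletion ι) :
    Function.Injective (Paper.K0Map ι) := by
  have := hι.full
  have := hι.faithful
  rw [injective_iff_map_eq_zero]
  intro x hx
  obtain ⟨A, rfl⟩ := K0.exists_mk x
  rw [K0Map_mk] at hx
  obtain ⟨c, d, e, h, h'⟩ := lrel_of_mk_eq_zero hx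
  obtain ⟨c', P, hP⟩ := exists_compl ι hι c
  obtain ⟨e', Q, hQ⟩ := exists_compl ι hι e
  have k := h.add (DT.split c' e')
  have k' := h'.add (DT.split c' e')
  rw [hP, hQ] at k k'
  obtain ⟨U, hU, hU'⟩ := DT.reflect_of_image ι hι k
  obtain ⟨V, hV, hV'⟩ := DT.reflect_of_image ι hι k'
  have : cl (ι.obj U) = cl (ι.obj (A ⊞ V)) := by
    have := preservesBinaryBiproduct_of_preservesBinaryProduct ι (X := A) (Y := V)
    obtain ⟨i⟩ : Nonempty (ι.obj (A ⊞ V) ≅ ι.obj A ⊞ ι.obj V) := ⟨ι.mapBiprod A V⟩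
    rw [cl_eq_iff.2 ⟨i⟩, cl_biprod, hU, hV]
    abel
  obtain ⟨i⟩ := cl_eq_iff.1 this
  have h5 := K0.mk_eq_of (cl_eq_iff.2 ⟨ι.preimageIso i⟩)
  rw [K0.mk_biprod, hU', hV'] at h5
  simpa using h5


/-- For an essentially small pretriangulated category `T`, the canonical
map `K₀(T) → K₀(T~)` induced by the (triangulated) fully faithful embedding of `T` into
its idempotent completion `T~` is injective. -/
theorem stmt1 {T : Type u} [Category.{v} T] [HasZeroObject T] [Preadditive T]
    [HasShift T ℤ] [∀ n : ℤ, (shiftFunctor T n).Additive] [Pretriangulated T]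
    [EssentiallySmall.{w} T]
    {T' : Type u'} [Category.{v'} T'] [HasZeroObject T'] [Preadditive T']
    [HasShift T' ℤ] [∀ n : ℤ, (shiftFunctor T' n).Additive] [Pretriangulated T']
    (ι : T ⥤ T') [ι.CommShift ℤ] [ι.IsTriangulated]
    (hι : Paper.IsIdempotentCompletion ι) :
    Function.Injective (Paper.K0Map ι) := by
  exact aux_stmt ι hι
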